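/- Let L be a full-rank sublattice of ℤⁿ generated by vectors A₁, …, Aₙ. Then there exists a basis B₁, …, Bₙ of ℤⁿ such that for every i ≤ n, the vector Bᵢ lies in the parallelepiped P(0, A₁, …, Aᵢ) = { Σ_{k=1}^{i} α_k A_k : 0 ≤ α_k ≤ 1 }. -/

import Mathlib

/-- The determinant of an integer matrix whose rows are linearly independent over `ℚ` is nonzero. -/
theorem Matrix.det_ne_zero_of_linearIndependent_rat_rows {n : ℕ} (A : Matrix (Fin n) (Fin n) ℤ)
    (hA : LinearIndependent ℚ (fun i => (fun j => ((A i j : ℤ) : ℚ)))) : A.det ≠ 0 := by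
  have h : IsUnit (A.map (Int.cast : ℤ → ℚ)) :=
    Matrix.linearIndependent_rows_iff_isUnit.mp hA
  rw [Matrix.isUnit_iff_isUnit_det, isUnit_iff_ne_zero] at h
  intro h0
  apply h
  have := Int.cast_det (R := ℚ) A
  rw [h0] at this
  simpa using this.symm

/-- Cramer's rule: `A.det • v` is the combination of the rows of `A` with coefficients
`Aᵀ.cramer v`. -/
theorem Matrix.det_mul_eq_sum_cramer_transpose {n : ℕ} (A : Matrix (Fin n) (Fin n) ℤ)
    (v : Fin n → ℤ) (j : Fin n) : A.det * v j = ∑ k, A.transpose.cramer v k * A k j := by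
  have h := congrFun (Matrix.mulVec_cramer A.transpose v) j
  rw [Matrix.det_transpose] at h
  simp only [Pi.smul_apply, smul_eq_mul] at h
  rw [← h]
  simp [Matrix.mulVec, dotProduct, mul_comm]

/-- Among the vectors `v` whose coordinates `Aᵀ.cramer v k` vanish for `k > i` there is one whose
`i`-th coordinate divides the `i`-th coordinate of every such vector, and all of whose coordinates,
divided by `A.det`, lie in `[0, 1]`. -/
theorem exists_reduced_generator {n : ℕ} (A : Matrix (Fin n) (Fin n) ℤ) (hD : A.det ≠ 0)
    (i : Fin n) :
    ∃ b : Fin n → ℤ,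
      (∀ k, i < k → A.transpose.cramer b k = 0) ∧
      (∀ k, (A.transpose.cramer b k : ℝ) / A.det ∈ Set.Icc (0 : ℝ) 1) ∧
      ∀ v : Fin n → ℤ, (∀ k, i < k → A.transpose.cramer v k = 0) →
        A.transpose.cramer b i ∣ A.transpose.cramer v i := by
  have hDR : (A.det : ℝ) ≠ 0 := by exact_mod_cast hD
  have hrow : ∀ k l, A.transpose.cramer (A k) l = if l = k then A.det else 0 := fun k l => by
    rw [Matrix.cramer_transpose_row_self, Pi.single_apply]
  let V : Submodule ℤ (Fin n → ℤ) :=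
    ⨅ k, ⨅ _ : i < k, LinearMap.ker (LinearMap.proj k ∘ₗ A.transpose.cramer)
  have hV : ∀ v, v ∈ V ↔ ∀ k, i < k → A.transpose.cramer v k = 0 := fun v => by
    simp [V, Submodule.mem_iInf]
  let I : Submodule ℤ ℤ := V.map (LinearMap.proj i ∘ₗ A.transpose.cramer)
  obtain ⟨g, hg⟩ := (IsPrincipalIdealRing.principal I).principal
  have hgI : g ∈ I := hg ▸ Submodule.mem_span_singleton_self g
  obtain ⟨w, hwV, hwg⟩ := hgI
  have hwg : A.transpose.cramer w i = g := hwg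
  have hdvd : ∀ v ∈ V, g ∣ A.transpose.cramer v i := fun v hv => by
    have : A.transpose.cramer v i ∈ I := ⟨v, hv, rfl⟩
    rw [hg] at this
    exact Ideal.mem_span_singleton.mp this
  have hAV : A i ∈ V := (hV _).mpr fun k hk => by rw [hrow, if_neg hk.ne']
  obtain ⟨m, hm⟩ : g ∣ A.det := by simpa [hrow] using hdvd _ hAV
  have hm0 : m ≠ 0 := by rintro rfl; simp_all
  have hg0 : g ≠ 0 := by rintro rfl; simp_all
  obtain ⟨u, huV, hug, hu⟩ : ∃ u ∈ V, A.transpose.cramer u i ∣ g ∧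
      (A.transpose.cramer u i : ℝ) / A.det ∈ Set.Icc (0 : ℝ) 1 := by
    have hgR : (g : ℝ) ≠ 0 := by exact_mod_cast hg0
    have hq : (g : ℝ) / A.det = (m : ℝ)⁻¹ := by
      rw [hm]; push_cast; field_simp
    rcases lt_or_gt_of_ne hm0 with h | h
    · refine ⟨-w, V.neg_mem hwV, by simp [hwg], ?_⟩
      have h1 : (1 : ℝ) ≤ -m := by exact_mod_cast (by omega : (1 : ℤ) ≤ -m)
      rw [map_neg, Pi.neg_apply, hwg, Int.cast_neg, neg_div, hq, ← inv_neg]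
      exact ⟨inv_nonneg.mpr (by linarith), inv_le_one_of_one_le₀ h1⟩
    · refine ⟨w, hwV, by simp [hwg], ?_⟩
      have h1 : (1 : ℝ) ≤ m := by exact_mod_cast (by omega : (1 : ℤ) ≤ m)
      rw [hwg, hq]
      exact ⟨inv_nonneg.mpr (by linarith), inv_le_one_of_one_le₀ h1⟩
  let c : Fin n → ℤ := fun k =>
    if k < i then ⌊(A.transpose.cramer u k : ℝ) / A.det⌋ else 0
  let b : Fin n → ℤ := u - ∑ k, c k • A k
  have hb : ∀ l, A.transpose.cramer b l = A.transpose.cramer u l - c l * A.det := fun l => by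
    simp only [b, map_sub, map_sum, map_smul, Pi.sub_apply, Finset.sum_apply, Pi.smul_apply,
      smul_eq_mul, hrow]
    simp
  have hb_ge : ∀ l, i ≤ l → A.transpose.cramer b l = A.transpose.cramer u l := fun l hl => by
    simp [hb, c, not_lt.mpr hl]
  refine ⟨b, fun k hk => ?_, fun k => ?_, fun v hv => ?_⟩
  · rw [hb_ge k hk.le, (hV u).mp huV k hk]
  · rcases lt_trichotomy k i with hk | rfl | hk
    · have : (A.transpose.cramer b k : ℝ) / A.det =
          Int.fract ((A.transpose.cramer u k : ℝ) / A.det) := by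
        rw [hb, Int.fract]
        simp only [c, if_pos hk]
        rw [Int.cast_sub, Int.cast_mul, sub_div, mul_div_cancel_right₀ _ hDR]
      rw [this]
      exact ⟨Int.fract_nonneg _, (Int.fract_lt_one _).le⟩
    · rw [hb_ge k le_rfl]; exact hu
    · rw [hb_ge k hk.le, (hV u).mp huV k hk]; simp
  · rw [hb_ge i le_rfl]
    exact hug.trans (hdvd v ((hV v).mpr hv))

/-- A family that is triangular with respect to the coordinates `Aᵀ.cramer`, with diagonal entries
dividing every attainable value, spans `ℤⁿ`. -/
theorem span_eq_top_of_triangular {n : ℕ} (A : Matrix (Fin n) (Fin n) ℤ) (hD : A.det ≠ 0)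
    (B : Fin n → (Fin n → ℤ)) (hB : ∀ i k, i < k → A.transpose.cramer (B i) k = 0)
    (hdvd : ∀ i, ∀ v : Fin n → ℤ, (∀ k, i < k → A.transpose.cramer v k = 0) →
      A.transpose.cramer (B i) i ∣ A.transpose.cramer v i) :
    Submodule.span ℤ (Set.range B) = ⊤ := by
  have key : ∀ m : ℕ, m ≤ n → ∀ v : Fin n → ℤ,
      (∀ k : Fin n, m ≤ k → A.transpose.cramer v k = 0) →
      v ∈ Submodule.span ℤ (Set.range B) := by
    intro m
    induction m with
    | zero =>
      intro _ v hv
      have : v = 0 := funext fun j => by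
        have h := A.det_mul_eq_sum_cramer_transpose v j
        simpa [hv, hD] using h
      rw [this]
      exact Submodule.zero_mem _
    | succ m ih =>
      intro hm v hv
      let i : Fin n := ⟨m, hm⟩
      obtain ⟨c, hc⟩ := hdvd i v fun k hk => hv k hk
      have hmem := ih (by omega) (v - c • B i) fun k hk => by
        simp only [map_sub, map_smul, Pi.sub_apply, Pi.smul_apply, smul_eq_mul]
        rcases eq_or_lt_of_le (show i ≤ k from hk) with rfl | h
        · rw [hc]; ring
        · rw [hv k h, hB i k h]; simp
      have := Submodule.add_mem _ hmem
        (Submodule.smul_mem _ c (Submodule.subset_span (Set.mem_range_self i)))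
      simpa using this
  exact Submodule.eq_top_iff'.mpr fun v =>
    key n le_rfl v fun k hk => absurd k.isLt (not_lt.mpr hk)

theorem stmt3 (n : ℕ) (A : Fin n → (Fin n → ℤ))
    (hA : LinearIndependent ℚ (fun i => (fun j => ((A i j : ℤ) : ℚ)))) :
    ∃ B : Fin n → (Fin n → ℤ),
      Submodule.span ℤ (Set.range B) = (⊤ : Submodule ℤ (Fin n → ℤ)) ∧
      ∀ i : Fin n, ∃ α : Fin n → ℝ,
        (∀ k, α k ∈ Set.Icc (0:ℝ) 1) ∧ (∀ k, i < k → α k = 0) ∧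
        (fun j => ((B i j : ℤ) : ℝ)) = ∑ k, α k • (fun j => ((A k j : ℤ) : ℝ)) := by
  have hD := Matrix.det_ne_zero_of_linearIndependent_rat_rows (Matrix.of A) hA
  choose B hB hIcc hdvd using exists_reduced_generator (Matrix.of A) hD
  refine ⟨B, span_eq_top_of_triangular _ hD B hB hdvd, fun i =>
    ⟨fun k => ((Matrix.of A).transpose.cramer (B i) k : ℝ) / (Matrix.of A).det, hIcc i,
      fun k hk => by simp [hB i k hk], funext fun j => ?_⟩⟩
  have hDR : ((Matrix.of A).det : ℝ) ≠ 0 := by exact_mod_cast hD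
  have h := congrArg (Int.cast : ℤ → ℝ)
    ((Matrix.of A).det_mul_eq_sum_cramer_transpose (B i) j)
  simp only [Int.cast_mul, Int.cast_sum] at h
  simp only [Finset.sum_apply, Pi.smul_apply, smul_eq_mul, div_mul_eq_mul_div]
  rw [← Finset.sum_div, eq_div_iff hDR, mul_comm]
  exact h
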